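/- arXiv:2603.12186 — 2 statements merged into one kernel-verified Lean document; each statement's English description precedes it below -/
import Mathlib

section
/- For every T > 0 there exists a constant C_T ∈ (0, ∞) such that for all t with 0 < t ≤ T and all x, y ∈ [0,1], the time derivative series of the Neumann heat kernel satisfies |2·∑_{k=1}^∞ k²π²·e^{−k²π²t}·cos(kπx)·cos(kπy)| ≤ C_T · t^{−3/2} · exp(−(x−y)²/(8t)); equivalently, |∂_t G^N_t(x,y)| ≤ C_T · t^{−3/2} · exp(−(x−y)²/(8t)). -/
open Real MeasureTheory

/-- The time-derivative series of the Neumann heat kernel on `[0,1]`: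
termwise `t`-differentiation of `G^N_t(x,y) = 1 + 2 ∑_{k≥1} e^{-k²π²t} cos(kπx) cos(kπy)`
gives `∂_t G^N_t(x,y) = -2 ∑_{k≥1} k²π² e^{-k²π²t} cos(kπx) cos(kπy)`, whose absolute value
equals that of `2 ∑_{k≥1} k²π² e^{-k²π²t} cos(kπx) cos(kπy)`. -/
noncomputable def GNderivT (t x y : ℝ) : ℝ :=
  2 * ∑' k : ℕ, (k + 1 : ℝ) ^ 2 * π ^ 2 * Real.exp (-((k + 1 : ℝ) ^ 2 * π ^ 2 * t)) *
      Real.cos ((k + 1 : ℝ) * π * x) * Real.cos ((k + 1 : ℝ) * π * y)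

/-!
Since `2 cos a cos b = cos (a - b) + cos (a + b)`, the Neumann kernel is the mean of
`θ (x - y)` and `θ (x + y)`, where `θ z w = ∑ₙ exp (-π²n²w + iπnz)` is holomorphic on `0 < re w`.
Poisson summation rewrites `θ z w` as `(πw)^(-1/2) ∑ₙ exp (-(2n - z)²/(4w))`, a sum over the
reflected images of the source. Bounding this on the circle of radius `t/2` about `t`, where
`re w⁻¹ ≥ 2/(3t)`, and applying Cauchy's estimate controls `∂ₜ θ z t`. Each image then
contributes at most `exp (-(2n - z)²/(6t))`, and `1/(6t) = 1/(8t) + 1/(24t)`: the first part gives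
the decay, because no image is closer than `|x - y|`, and the second makes the sum converge.
-/

open Complex (I)

section ImageSum

/-- The sum over all images `2n` of the Gaussians `exp (-a (2n - z)²)`: the period-`2`
Gaussian that Poisson summation produces from the theta series. -/
noncomputable def imageSum (a z : ℝ) : ℝ :=
  ∑' n : ℤ, Real.exp (-a * (2 * n - z) ^ 2)

variable {a b : ℝ}

lemma summable_imageSum (ha : 0 < a) (z : ℝ) :
    Summable fun n : ℤ ↦ Real.exp (-a * (2 * n - z) ^ 2) := by
  have ht : 0 < 4 * a / π := by positivity
  refine (HurwitzZeta.hasSum_int_evenKernel (-z / 2) ht).summable.congr fun n ↦ ?_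
  congr 1
  field_simp
  ring

lemma imageSum_pos (ha : 0 < a) (z : ℝ) : 0 < imageSum a z :=
  (summable_imageSum ha z).tsum_pos (fun _ ↦ by positivity) 0 (by positivity)

lemma imageSum_le_imageSum (ha : 0 < a) (hab : a ≤ b) (z : ℝ) : imageSum b z ≤ imageSum a z :=
  (summable_imageSum (ha.trans_le hab) z).tsum_le_tsum (fun n ↦ by gcongr)
    (summable_imageSum ha z)

lemma imageSum_add_le {z d : ℝ} (ha : 0 < a) (hb : 0 ≤ b)
    (hd : ∀ n : ℤ, d ^ 2 ≤ (2 * n - z) ^ 2) :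
    imageSum (a + b) z ≤ Real.exp (-b * d ^ 2) * imageSum a z := by
  rw [imageSum, imageSum, ← tsum_mul_left]
  refine (summable_imageSum (by positivity) z).tsum_le_tsum (fun n ↦ ?_)
    ((summable_imageSum ha z).mul_left _)
  rw [← Real.exp_add, Real.exp_le_exp]
  linarith [mul_le_mul_of_nonneg_left (hd n) hb]

lemma imageSum_le_exp_mul_imageSum_zero {z R : ℝ} (ha : 0 < a) (hab : a ≤ b) (hz : |z| ≤ R) :
    imageSum b z ≤ Real.exp (a * R ^ 2) * imageSum (a / 2) 0 := by
  refine (imageSum_le_imageSum ha hab z).trans ?_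
  rw [imageSum, imageSum, ← tsum_mul_left]
  refine (summable_imageSum ha z).tsum_le_tsum (fun n ↦ ?_)
    ((summable_imageSum (half_pos ha) 0).mul_left _)
  have hzR : z ^ 2 ≤ R ^ 2 := sq_le_sq.2 (hz.trans (le_abs_self R))
  have hn : (2 * n : ℝ) ^ 2 / 2 ≤ (2 * n - z) ^ 2 + z ^ 2 := by
    linarith [sq_nonneg ((n : ℝ) - z)]
  rw [← Real.exp_add, Real.exp_le_exp, sub_zero]
  linarith [mul_le_mul_of_nonneg_left (hn.trans (add_le_add_right hzR _)) ha.le]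

end ImageSum

lemma sq_le_sq_two_mul_intCast_sub {z : ℝ} (hz : |z| ≤ 1) (n : ℤ) :
    z ^ 2 ≤ (2 * n - z) ^ 2 := by
  obtain ⟨hz₁, hz₂⟩ := abs_le.1 hz
  suffices 0 ≤ (n : ℝ) * (n - z) by linarith
  rcases lt_trichotomy n 0 with hn | rfl | hn
  · have hn' : (n : ℝ) ≤ -1 := by exact_mod_cast Int.le_sub_one_of_lt hn
    exact mul_nonneg_of_nonpos_of_nonpos (by linarith) (by linarith)
  · simp
  · have hn' : (1 : ℝ) ≤ n := by exact_mod_cast hn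
    exact mul_nonneg (by linarith) (by linarith)

lemma sq_sub_le_sq_two_mul_intCast_sub_add {x y : ℝ} (hx : x ∈ Set.Icc (0 : ℝ) 1)
    (hy : y ∈ Set.Icc (0 : ℝ) 1) (n : ℤ) :
    (x - y) ^ 2 ≤ (2 * n - (x + y)) ^ 2 := by
  suffices 0 ≤ ((n : ℝ) - x) * (n - y) by linarith
  rcases le_or_gt n 0 with hn | hn
  · have hn' : (n : ℝ) ≤ 0 := by exact_mod_cast hn
    exact mul_nonneg_of_nonpos_of_nonpos (by linarith [hx.1]) (by linarith [hy.1])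
  · have hn' : (1 : ℝ) ≤ n := by exact_mod_cast hn
    exact mul_nonneg (by linarith [hx.2]) (by linarith [hy.2])

section Disc

variable {t r : ℝ} {w : ℂ}

lemma sub_le_re_of_mem_closedBall (hw : w ∈ Metric.closedBall (t : ℂ) r) : t - r ≤ w.re := by
  have hre := (abs_le.1 ((Complex.abs_re_le_norm (w - t)).trans (mem_closedBall_iff_norm.1 hw))).1
  rw [Complex.sub_re, Complex.ofReal_re] at hre
  linarith

lemma one_div_add_le_inv_re_of_mem_closedBall (hrt : r < t)
    (hw : w ∈ Metric.closedBall (t : ℂ) r) : 1 / (t + r) ≤ (w⁻¹).re := by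
  have hnorm : ‖w - t‖ ≤ r := mem_closedBall_iff_norm.1 hw
  have hr : 0 ≤ r := (norm_nonneg _).trans hnorm
  have hre : t - r ≤ w.re := sub_le_re_of_mem_closedBall hw
  have hre' : w.re - t ≤ r := by simpa using (Complex.re_le_norm (w - t)).trans hnorm
  have hsq : (w.re - t) * (w.re - t) + w.im * w.im ≤ r ^ 2 := by
    simpa [Complex.sq_norm, Complex.normSq_apply] using pow_le_pow_left₀ (norm_nonneg _) hnorm 2
  have hw₀ : 0 < Complex.normSq w := Complex.normSq_pos.2 (Complex.ne_zero_of_re_pos (by linarith))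
  rw [Complex.inv_re, div_le_div_iff₀ (by linarith) hw₀, Complex.normSq_apply]
  linarith [mul_nonneg (sub_nonneg.2 hrt.le) (sub_nonneg.2 hre')]

end Disc

section CircleTheta

/-- The theta series `∑ₙ exp (-π²n²w + iπnz)`, which is twice the heat kernel of the circle `ℝ/2ℤ`
at displacement `z`, continued to complex times `w` with `0 < re w`. -/
noncomputable def circleTheta (z : ℝ) (w : ℂ) : ℂ := jacobiTheta₂ (z / 2) (π * I * w)

variable {w : ℂ} {t r : ℝ}

lemma im_pi_mul_I_mul_pos (hw : 0 < w.re) : 0 < (π * I * w).im := by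
  simpa using mul_pos pi_pos hw

lemma hasDerivAt_circleTheta (z : ℝ) (hw : 0 < w.re) :
    HasDerivAt (circleTheta z) (jacobiTheta₂_fderiv (z / 2) (π * I * w) (0, π * I)) w := by
  have hpath : HasDerivAt (fun w : ℂ ↦ ((z / 2 : ℂ), π * I * w)) (0, π * I) w :=
    (hasDerivAt_const w _).prodMk (by simpa using (hasDerivAt_id w).const_mul (π * I))
  exact (hasFDerivAt_jacobiTheta₂ _ (im_pi_mul_I_mul_pos hw)).comp_hasDerivAt w hpath

lemma jacobiTheta₂_term_fderiv_apply_time (n : ℤ) (z : ℝ) (w : ℂ) :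
    jacobiTheta₂_term_fderiv n (z / 2) (π * I * w) (0, π * I) =
      -(n ^ 2 * π ^ 2) * Complex.exp (-(n ^ 2 * π ^ 2 * w) + n * π * z * I) := by
  have hexp : 2 * π * I * n * (z / 2) + π * I * n ^ 2 * (π * I * w) =
      -(n ^ 2 * π ^ 2 * w) + n * π * z * I := by
    linear_combination (π ^ 2 * n ^ 2 * w) * Complex.I_sq
  simp only [jacobiTheta₂_term_fderiv, hexp, FunLike.coe_smul, Pi.smul_apply, add_apply,
    ContinuousLinearMap.coe_fst', ContinuousLinearMap.coe_snd', smul_eq_mul, mul_zero, zero_add]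
  linear_combination (Complex.exp (-(n ^ 2 * π ^ 2 * w) + n * π * z * I) * π ^ 2 * n ^ 2) *
    Complex.I_sq

lemma hasSum_deriv_circleTheta (z : ℝ) (hw : 0 < w.re) :
    HasSum (fun n : ℤ ↦ -(n ^ 2 * π ^ 2 : ℂ) *
      Complex.exp (-(n ^ 2 * π ^ 2 * w) + n * π * z * I)) (deriv (circleTheta z) w) := by
  rw [(hasDerivAt_circleTheta z hw).deriv]
  simpa only [ContinuousLinearMap.apply_apply, jacobiTheta₂_term_fderiv_apply_time] using
    (hasSum_jacobiTheta₂_term_fderiv (z / 2) (im_pi_mul_I_mul_pos hw)).mapL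
      (ContinuousLinearMap.apply ℂ ℂ ((0, π * I) : ℂ × ℂ))

lemma hasSum_re_deriv_circleTheta (z : ℝ) (ht : 0 < t) :
    HasSum (fun n : ℤ ↦ -(n ^ 2 * π ^ 2 * Real.exp (-(n ^ 2 * π ^ 2 * t)) *
      Real.cos (n * π * z))) (deriv (circleTheta z) t).re := by
  have hsum := Complex.hasSum_re (hasSum_deriv_circleTheta z (w := t) (by simpa using ht))
  refine hsum.congr_fun fun n ↦ ?_
  have hcoeff : -(n ^ 2 * π ^ 2 : ℂ) = ((-(n ^ 2 * π ^ 2) : ℝ) : ℂ) := by push_cast; rfl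
  have hexp : -(n ^ 2 * π ^ 2 * t) + n * π * z * I =
      ((-(n ^ 2 * π ^ 2 * t) : ℝ) : ℂ) + ((n * π * z : ℝ) : ℂ) * I := by push_cast; rfl
  rw [hcoeff, hexp, Complex.re_ofReal_mul, Complex.exp_re]
  simp only [Complex.add_re, Complex.add_im, Complex.ofReal_re, Complex.ofReal_im,
    Complex.re_ofReal_mul, Complex.im_ofReal_mul, Complex.I_re, Complex.I_im, mul_zero, mul_one,
    add_zero, zero_add]
  ring

lemma circleTheta_eq_tsum_image (z : ℝ) (hw : 0 < w.re) :
    circleTheta z w = 1 / (π * w) ^ (1 / 2 : ℂ) *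
      ∑' n : ℤ, Complex.exp ((-(1 / 4) * (2 * n - z) ^ 2 : ℝ) * w⁻¹) := by
  have hπw : 0 < (π * w).re := by simpa using mul_pos pi_pos hw
  have hw₀ : w ≠ 0 := Complex.ne_zero_of_re_pos hw
  have hπ : (π : ℂ) ≠ 0 := Complex.ofReal_ne_zero.2 pi_ne_zero
  calc circleTheta z w
      = ∑' n : ℤ, Complex.exp (-π * (π * w) * n ^ 2 + 2 * π * (I * z / 2) * n) := by
        refine tsum_congr fun n ↦ congrArg Complex.exp ?_
        linear_combination (π ^ 2 * n ^ 2 * w) * Complex.I_sq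
    _ = 1 / (π * w) ^ (1 / 2 : ℂ) *
          ∑' n : ℤ, Complex.exp (-π / (π * w) * (n + I * (I * z / 2)) ^ 2) :=
        Complex.tsum_exp_neg_quadratic hπw _
    _ = _ := by
        congr! 4 with n
        have hcentre : n + I * (I * z / 2) = n - z / 2 := by
          linear_combination (z / 2) * Complex.I_sq
        rw [hcentre]
        push_cast
        field_simp
        ring

lemma norm_circleTheta_le (z : ℝ) (hw : 0 < w.re) :
    ‖circleTheta z w‖ ≤ (π * ‖w‖) ^ (-(1 / 2) : ℝ) * imageSum ((w⁻¹).re / 4) z := by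
  have hw₀ : w ≠ 0 := Complex.ne_zero_of_re_pos hw
  have hinv : 0 < (w⁻¹).re / 4 := by
    rw [Complex.inv_re]
    exact div_pos (div_pos hw (Complex.normSq_pos.2 hw₀)) four_pos
  have hprefactor : ‖1 / (π * w) ^ (1 / 2 : ℂ)‖ = (π * ‖w‖) ^ (-(1 / 2) : ℝ) := by
    have hpow := Complex.norm_cpow_real (π * w) (1 / 2)
    push_cast at hpow
    rw [norm_div, norm_one, hpow, norm_mul, Complex.norm_of_nonneg pi_pos.le,
      Real.rpow_neg (by positivity), one_div]
  rw [circleTheta_eq_tsum_image z hw, norm_mul, hprefactor]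
  gcongr
  refine tsum_of_norm_bounded (summable_imageSum hinv z).hasSum fun n ↦ le_of_eq ?_
  rw [Complex.norm_exp, Complex.re_ofReal_mul]
  congr 1
  ring

lemma diffContOnCl_circleTheta (z : ℝ) (hrt : r < t) :
    DiffContOnCl ℂ (circleTheta z) (Metric.ball (t : ℂ) r) := by
  refine DifferentiableOn.diffContOnCl fun w hw ↦ ?_
  have hre := sub_le_re_of_mem_closedBall (Metric.closure_ball_subset_closedBall hw)
  exact (hasDerivAt_circleTheta z (by linarith)).differentiableAt.differentiableWithinAt

lemma norm_deriv_circleTheta_le (z : ℝ) (hr : 0 < r) (hrt : r < t) :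
    ‖deriv (circleTheta z) t‖ ≤
      (π * (t - r)) ^ (-(1 / 2) : ℝ) * imageSum (1 / (4 * (t + r))) z / r := by
  refine Complex.norm_deriv_le_of_forall_mem_sphere_norm_le hr (diffContOnCl_circleTheta z hrt)
    fun w hw ↦ ?_
  have hw' := Metric.sphere_subset_closedBall hw
  have hre : t - r ≤ w.re := sub_le_re_of_mem_closedBall hw'
  have hnorm : t - r ≤ ‖w‖ := hre.trans (Complex.re_le_norm w)
  have hinv : 1 / (4 * (t + r)) ≤ (w⁻¹).re / 4 := by
    rw [mul_comm, ← div_div]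
    gcongr
    exact one_div_add_le_inv_re_of_mem_closedBall hrt hw'
  calc ‖circleTheta z w‖
      ≤ (π * ‖w‖) ^ (-(1 / 2) : ℝ) * imageSum ((w⁻¹).re / 4) z :=
        norm_circleTheta_le z (by linarith)
    _ ≤ (π * (t - r)) ^ (-(1 / 2) : ℝ) * imageSum (1 / (4 * (t + r))) z := by
        have hpos : 0 < 1 / (4 * (t + r)) := one_div_pos.2 (by linarith)
        refine mul_le_mul ?_ (imageSum_le_imageSum hpos hinv z)
          (imageSum_pos (hpos.trans_le hinv) z).le (by have := sub_pos.2 hrt; positivity)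
        exact Real.rpow_le_rpow_of_nonpos (mul_pos pi_pos (sub_pos.2 hrt)) (by gcongr)
          (by norm_num)

lemma norm_deriv_circleTheta_le_exp {z d : ℝ} (ht : 0 < t)
    (hd : ∀ n : ℤ, d ^ 2 ≤ (2 * n - z) ^ 2) :
    ‖deriv (circleTheta z) t‖ ≤
      2 * imageSum (1 / (24 * t)) z * t ^ (-(3 / 2) : ℝ) * Real.exp (-d ^ 2 / (8 * t)) := by
  have hprefactor : (π * (t - t / 2)) ^ (-(1 / 2) : ℝ) ≤ t ^ (-(1 / 2) : ℝ) :=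
    Real.rpow_le_rpow_of_nonpos ht (by nlinarith [pi_gt_three]) (by norm_num)
  have himage : imageSum (1 / (4 * (t + t / 2))) z ≤
      Real.exp (-d ^ 2 / (8 * t)) * imageSum (1 / (24 * t)) z := by
    convert imageSum_add_le (a := 1 / (24 * t)) (b := 1 / (8 * t)) (by positivity)
      (by positivity) hd using 2
    · field_simp
      norm_num
    · congr 1
      ring
  have hpow : t ^ (-(3 / 2) : ℝ) = t ^ (-(1 / 2) : ℝ) / t := by
    rw [← Real.rpow_sub_one ht.ne']
    norm_num
  have hpos : 0 < imageSum (1 / (4 * (t + t / 2))) z := imageSum_pos (by positivity) z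
  calc ‖deriv (circleTheta z) t‖
      ≤ (π * (t - t / 2)) ^ (-(1 / 2) : ℝ) * imageSum (1 / (4 * (t + t / 2))) z / (t / 2) :=
        norm_deriv_circleTheta_le z (half_pos ht) (half_lt_self ht)
    _ ≤ t ^ (-(1 / 2) : ℝ) *
          (Real.exp (-d ^ 2 / (8 * t)) * imageSum (1 / (24 * t)) z) / (t / 2) := by
        gcongr
    _ = _ := by
        rw [hpow]
        field_simp

end CircleTheta

lemma hasSum_int_exp_mul_cos_mul_cos {t : ℝ} (ht : 0 < t) (x y : ℝ) :
    HasSum (fun n : ℤ ↦ n ^ 2 * π ^ 2 * Real.exp (-(n ^ 2 * π ^ 2 * t)) *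
      Real.cos (n * π * x) * Real.cos (n * π * y))
      (-((deriv (circleTheta (x - y)) t).re + (deriv (circleTheta (x + y)) t).re) / 2) := by
  have hsum := (hasSum_re_deriv_circleTheta (x - y) ht).add (hasSum_re_deriv_circleTheta (x + y) ht)
  refine (hsum.neg.div_const 2).congr_fun fun n ↦ ?_
  rw [mul_sub, mul_add, Real.cos_sub, Real.cos_add]
  ring

lemma GNderivT_eq_re_deriv_circleTheta {t : ℝ} (ht : 0 < t) (x y : ℝ) :
    GNderivT t x y =
      -((deriv (circleTheta (x - y)) t).re + (deriv (circleTheta (x + y)) t).re) / 2 := by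
  have hsum := hasSum_int_exp_mul_cos_mul_cos ht x y
  rw [← hsum.tsum_eq, tsum_int_eq_zero_add_two_mul_tsum_pnat (fun n ↦ by simp) hsum.summable]
  simp [GNderivT, tsum_pnat_eq_tsum_succ (f := fun k : ℕ ↦ (k : ℝ) ^ 2 * π ^ 2 *
    Real.exp (-((k : ℝ) ^ 2 * π ^ 2 * t)) * Real.cos (k * π * x) * Real.cos (k * π * y))]

theorem neumann_kernel_time_derivative_bound (T : ℝ) (hT : 0 < T) :
    ∃ C : ℝ, 0 < C ∧ ∀ t x y : ℝ, 0 < t → t ≤ T →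
      x ∈ Set.Icc (0 : ℝ) 1 → y ∈ Set.Icc (0 : ℝ) 1 →
      |GNderivT t x y| ≤ C * t ^ (-(3/2) : ℝ) * Real.exp (-(x - y) ^ 2 / (8 * t)) := by
  have ha : 0 < 1 / (24 * T) := by positivity
  let K : ℝ := Real.exp (1 / (24 * T) * 2 ^ 2) * imageSum (1 / (24 * T) / 2) 0
  have hK : 0 < K := mul_pos (Real.exp_pos _) (imageSum_pos (half_pos ha) 0)
  refine ⟨2 * K, mul_pos two_pos hK, fun t x y ht htT hx hy ↦ ?_⟩
  have hderiv (z : ℝ) (hz : |z| ≤ 2) (hd : ∀ n : ℤ, (x - y) ^ 2 ≤ (2 * n - z) ^ 2) :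
      |(deriv (circleTheta z) t).re| ≤
        2 * K * t ^ (-(3 / 2) : ℝ) * Real.exp (-(x - y) ^ 2 / (8 * t)) := by
    refine (Complex.abs_re_le_norm _).trans ((norm_deriv_circleTheta_le_exp ht hd).trans ?_)
    gcongr
    exact imageSum_le_exp_mul_imageSum_zero ha (by gcongr) hz
  have hdiff : |x - y| ≤ 1 := abs_le.2 ⟨by linarith [hx.1, hy.2], by linarith [hx.2, hy.1]⟩
  have hsum : |x + y| ≤ 2 := abs_le.2 ⟨by linarith [hx.1, hy.1], by linarith [hx.2, hy.2]⟩
  have hdirect := hderiv (x - y) (by linarith) (sq_le_sq_two_mul_intCast_sub hdiff)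
  have hreflected := hderiv (x + y) hsum (sq_sub_le_sq_two_mul_intCast_sub_add hx hy)
  rw [GNderivT_eq_re_deriv_circleTheta ht, neg_div, abs_neg, abs_div, abs_two]
  linarith [abs_add_le (deriv (circleTheta (x - y)) t).re (deriv (circleTheta (x + y)) t).re]
end

section
/- For every β ∈ (0, 1/4) and every T > 0 there exists a constant C > 0 (depending only on β and T) such that for all s, t, t̄ with 0 ≤ s < min(t, t̄) and t, t̄ ≤ T, and all x̄, y ∈ [0,1], writing t₀ := min(t, t̄), one has ∫ₛ^{t₀} ∫₀¹ (G^N_{t−θ}(x̄,r) − G^N_{t̄−θ}(x̄,r))² · p_{θ−s}(y − r)² dr dθ ≤ C · |t − t̄|^{2β} · (t₀ − s)^{−1/2−2β}. -/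
open Real MeasureTheory

/-- The standard one-dimensional heat kernel `p_t(x) = (4πt)^{-1/2} exp(-x²/(4t))`. -/
noncomputable def heatKernel (t x : ℝ) : ℝ :=
  (4 * π * t) ^ (-(1/2) : ℝ) * Real.exp (-x ^ 2 / (4 * t))

/-- The Neumann heat kernel on `[0,1]`:
`G^N_t(x,y) = 1 + 2 ∑_{k=1}^∞ e^{-k²π²t} cos(kπx) cos(kπy)`. -/
noncomputable def GN (t x y : ℝ) : ℝ :=
  1 + 2 * ∑' k : ℕ, Real.exp (-((k + 1 : ℝ) ^ 2 * π ^ 2 * t)) *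
      Real.cos ((k + 1 : ℝ) * π * x) * Real.cos ((k + 1 : ℝ) * π * y)

/-!
Take `t ≤ t'` and write `u = t - θ`, `v = θ - s`, `h = t' - t`. In the cosine expansion of
`GN u x · - GN (u + h) x ·` each coefficient is at most `(h / u) ^ β` times an eigenvalue decay
factor at time `u / 2`. Comparing `∑ exp (-k²π²u)` with a Gaussian integral bounds the increment
by `(h / u) ^ β * u ^ (-1/2)` uniformly, and Parseval's identity bounds its squared `L²` norm by
`(h / u) ^ (2β) * u ^ (-1/2)`. The squared heat kernel is at most `v⁻¹` and has integral at most
`v ^ (-1/2)`. For `v ≤ u` use the uniform bound on the increment, for `u ≤ v` the one on the heat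
kernel: in both cases the inner integral is at most
`(h / u) ^ (2β) * (u * v * max u v) ^ (-1/2)`. Since `max u v ≥ (u + v) / 2 = (t - s) / 2` does
not depend on `θ`, what remains is the Beta integral of `u ^ (-1/2 - 2β) * v ^ (-1/2)`, which
converges exactly because `β < 1 / 4`.
-/

section ExponentialBounds

variable {a b β : ℝ}

lemma one_sub_exp_neg_le_rpow (ha : 0 ≤ a) (hβ0 : 0 ≤ β) (hβ1 : β ≤ 1) :
    1 - exp (-a) ≤ a ^ β := by
  rcases le_total a 1 with ha1 | ha1
  · calc 1 - exp (-a) ≤ a ^ (1 : ℝ) := by rw [rpow_one]; linarith [one_sub_le_exp_neg a]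
      _ ≤ a ^ β := rpow_le_rpow_of_exponent_ge' ha ha1 hβ0 hβ1
  · linarith [one_le_rpow ha1 hβ0, exp_pos (-a)]

lemma rpow_le_exp_half (ha : 0 ≤ a) (hβ0 : 0 ≤ β) (hβ1 : β ≤ 1) : a ^ β ≤ exp (a / 2) := by
  rcases le_total a 1 with ha1 | ha1
  · exact (rpow_le_one ha ha1 hβ0).trans (one_le_exp (by positivity))
  · calc a ^ β ≤ a ^ (1 : ℝ) := rpow_le_rpow_of_exponent_le ha1 hβ1
      _ = 2 * (a / 2) := by rw [rpow_one]; ring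
      _ ≤ exp 1 * (a / 2) := by gcongr; linarith [add_one_le_exp (1 : ℝ)]
      _ ≤ exp (a / 2) := exp_one_mul_le_exp

lemma exp_neg_sub_exp_neg_le (ha : 0 < a) (hab : a ≤ b) (hβ0 : 0 ≤ β) (hβ1 : β ≤ 1) :
    exp (-a) - exp (-b) ≤ ((b - a) / a) ^ β * exp (-a / 2) := by
  have hba : 0 ≤ b - a := sub_nonneg.2 hab
  calc exp (-a) - exp (-b) = exp (-a) * (1 - exp (-(b - a))) := by
        rw [mul_sub, mul_one, ← exp_add]; ring_nf
    _ ≤ exp (-a) * (b - a) ^ β := by gcongr; exact one_sub_exp_neg_le_rpow hba hβ0 hβ1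
    _ = ((b - a) / a) ^ β * (a ^ β * exp (-a)) := by
        rw [div_rpow hba ha.le]; field_simp
    _ ≤ ((b - a) / a) ^ β * (exp (a / 2) * exp (-a)) := by
        gcongr; exact rpow_le_exp_half ha.le hβ0 hβ1
    _ = ((b - a) / a) ^ β * exp (-a / 2) := by rw [← exp_add]; ring_nf

lemma sum_range_exp_neg_mul_succ_sq_le (hb : 0 < b) (n : ℕ) :
    ∑ k ∈ Finset.range n, exp (-b * (k + 1 : ℝ) ^ 2) ≤ √(π / b) / 2 := by
  have hanti : AntitoneOn (fun x : ℝ ↦ exp (-b * x ^ 2)) (Set.Icc 0 (0 + n)) := by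
    intro x hx y _ hxy
    have := pow_le_pow_left₀ hx.1 hxy 2
    exact exp_le_exp.2 (by nlinarith)
  calc ∑ k ∈ Finset.range n, exp (-b * (k + 1 : ℝ) ^ 2)
      ≤ ∫ x in (0 : ℝ)..n, exp (-b * x ^ 2) := by simpa using hanti.sum_le_integral
    _ = ∫ x in Set.Ioc (0 : ℝ) n, exp (-b * x ^ 2) :=
        intervalIntegral.integral_of_le n.cast_nonneg
    _ ≤ ∫ x in Set.Ioi (0 : ℝ), exp (-b * x ^ 2) :=
        setIntegral_mono_set (integrable_exp_neg_mul_sq hb).integrableOn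
          (.of_forall fun x ↦ (exp_pos _).le) Set.Ioc_subset_Ioi_self.eventuallyLE
    _ = √(π / b) / 2 := integral_gaussian_Ioi b

end ExponentialBounds

section OrthogonalSeries

variable {α ι : Type*} [MeasurableSpace α] {μ : Measure α} [Countable ι]
  {e : ι → α → ℝ} {a : ι → ℝ} {M : ℝ}

lemma integral_tsum_mul_of_abs_le {g : α → ℝ} (he : ∀ k, Measurable (e k))
    (heM : ∀ k z, |e k z| ≤ M) (ha : Summable a) (hg : Integrable g μ) :
    ∫ z, (∑' k, a k * e k z) * g z ∂μ = ∑' k, a k * ∫ z, e k z * g z ∂μ := by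
  have hint (k : ι) : Integrable (fun z ↦ e k z * g z) μ :=
    hg.bdd_mul (he k).aestronglyMeasurable (.of_forall (heM k))
  have hnorm (k : ι) : ‖∫ z, ‖a k * (e k z * g z)‖ ∂μ‖ ≤ |a k| * (M * ∫ z, |g z| ∂μ) := by
    rw [norm_of_nonneg (integral_nonneg fun _ ↦ norm_nonneg _), ← integral_const_mul,
      ← integral_const_mul]
    refine integral_mono ((hint k).const_mul _).norm ((hg.abs.const_mul M).const_mul _) fun z ↦ ?_
    simp only [norm_eq_abs, abs_mul]
    gcongr
    exact heM k z
  have hsum : Summable fun k ↦ ∫ z, ‖a k * (e k z * g z)‖ ∂μ :=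
    .of_norm_bounded (ha.abs.mul_right _) hnorm
  simp_rw [← integral_const_mul, ← tsum_mul_right, mul_assoc]
  exact (integral_tsum_of_summable_integral_norm (fun k ↦ (hint k).const_mul _) hsum).symm

lemma integral_tsum_sq_of_orthogonal [IsFiniteMeasure μ] (he : ∀ k, Measurable (e k))
    (heM : ∀ k z, |e k z| ≤ M) (horth : Pairwise fun k l ↦ ∫ z, e k z * e l z ∂μ = 0)
    (ha : Summable a) :
    ∫ z, (∑' k, a k * e k z) ^ 2 ∂μ = ∑' k, a k ^ 2 * ∫ z, e k z ^ 2 ∂μ := by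
  have hterm (k : ι) (z : α) : ‖a k * e k z‖ ≤ |a k| * M := by
    rw [norm_mul]; exact mul_le_mul_of_nonneg_left (heM k z) (abs_nonneg _)
  have hint : Integrable (fun z ↦ ∑' k, a k * e k z) μ :=
    .of_bound (Measurable.tsum fun k ↦ (he k).const_mul _).aestronglyMeasurable _
      (.of_forall fun z ↦ tsum_of_norm_bounded (ha.abs.mul_right M).hasSum fun k ↦ hterm k z)
  have hcoeff (k : ι) : ∫ z, e k z * ∑' l, a l * e l z ∂μ = a k * ∫ z, e k z ^ 2 ∂μ := by
    simp_rw [mul_comm (e k _) (tsum _)]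
    rw [integral_tsum_mul_of_abs_le he heM ha
        (.of_bound (he k).aestronglyMeasurable M (.of_forall (heM k))),
      tsum_eq_single k fun l hl ↦ by rw [horth hl, mul_zero]]
    simp_rw [sq]
  simp_rw [sq (tsum _)]
  rw [integral_tsum_mul_of_abs_le he heM ha hint]
  simp_rw [hcoeff, sq (a _), mul_assoc]

end OrthogonalSeries

lemma integral_rpow_mul_rpow_eq_beta {a b s t : ℝ} (ha : 0 < a) (hb : 0 < b) (hst : s < t) :
    ∫ θ in s..t, (θ - s) ^ (a - 1) * (t - θ) ^ (b - 1) =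
      (t - s) ^ (a + b - 1) * ProbabilityTheory.beta a b := by
  have hL : 0 < t - s := sub_pos.2 hst
  have hscaled : ((∫ τ in (0 : ℝ)..(t - s), τ ^ (a - 1) * (t - s - τ) ^ (b - 1) : ℝ) : ℂ) =
      ((t - s) ^ (a + b - 1) : ℝ) * Complex.betaIntegral a b := by
    rw [← intervalIntegral.integral_ofReal, Complex.ofReal_cpow hL.le]
    push_cast
    rw [← Complex.ofReal_sub, ← Complex.betaIntegral_scaled _ _ hL]
    refine intervalIntegral.integral_congr fun τ hτ ↦ ?_
    rw [Set.uIcc_of_le hL.le] at hτ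
    simp only [Complex.ofReal_cpow hτ.1,
      Complex.ofReal_cpow (sub_nonneg.2 hτ.2)]
    push_cast
    rfl
  have hre := congrArg Complex.re hscaled
  rw [Complex.re_ofReal_mul, ← ProbabilityTheory.beta_eq_betaIntegralReal a b ha hb,
    Complex.ofReal_re] at hre
  rw [← hre, ← sub_self s, ← intervalIntegral.integral_comp_sub_right _ s]
  simp only [sub_sub_sub_cancel_right]

lemma intervalIntegrable_rpow_mul_rpow {a b s t : ℝ} (ha : 0 < a) (hb : 0 < b) (hst : s < t) :
    IntervalIntegrable (fun θ ↦ (θ - s) ^ (a - 1) * (t - θ) ^ (b - 1)) volume s t := by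
  refine intervalIntegral.intervalIntegrable_of_integral_ne_zero ?_
  rw [integral_rpow_mul_rpow_eq_beta ha hb hst]
  exact (mul_pos (rpow_pos_of_pos (sub_pos.2 hst) _) (ProbabilityTheory.beta_pos ha hb)).ne'

/-- The eigenvalue `((k + 1)π)²` of the Neumann Laplacian `-d²/dx²` on `[0,1]`. As in `GN`, the
index is shifted so that the constant mode is left out. -/
noncomputable def neumannEigenvalue (k : ℕ) : ℝ := (k + 1 : ℝ) ^ 2 * π ^ 2

/-- The unnormalised eigenfunction `cos((k + 1)πx)` of the Neumann Laplacian on `[0,1]` for the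
eigenvalue `neumannEigenvalue k`. -/
noncomputable def neumannMode (k : ℕ) (x : ℝ) : ℝ := cos ((k + 1 : ℝ) * π * x)

/-- Half of the `k`-th cosine coefficient of `r ↦ GN u x r - GN w x r`. -/
noncomputable def incrementCoeff (u w x : ℝ) (k : ℕ) : ℝ :=
  (exp (-(neumannEigenvalue k * u)) - exp (-(neumannEigenvalue k * w))) * neumannMode k x

lemma neumannEigenvalue_pos (k : ℕ) : 0 < neumannEigenvalue k := by
  unfold neumannEigenvalue; positivity

lemma abs_neumannMode_le_one (k : ℕ) (x : ℝ) : |neumannMode k x| ≤ 1 := abs_cos_le_one _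

lemma norm_mul_neumannMode_le (c : ℝ) (k : ℕ) (x : ℝ) : ‖c * neumannMode k x‖ ≤ |c| := by
  rw [norm_eq_abs, abs_mul]
  exact mul_le_of_le_one_right (abs_nonneg _) (abs_neumannMode_le_one k x)

lemma continuous_neumannMode (k : ℕ) : Continuous (neumannMode k) := by
  unfold neumannMode; fun_prop

lemma integral_cos_int_mul_pi_mul {n : ℤ} (hn : n ≠ 0) :
    ∫ r in (0 : ℝ)..1, cos (n * π * r) = 0 := by
  have hnπ : (n : ℝ) * π ≠ 0 := mul_ne_zero (Int.cast_ne_zero.2 hn) pi_ne_zero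
  rw [intervalIntegral.integral_comp_mul_left _ hnπ, integral_cos]
  simp [sin_int_mul_pi]

lemma integral_neumannMode_mul (k l : ℕ) :
    ∫ r in (0 : ℝ)..1, neumannMode k r * neumannMode l r = if k = l then 1 / 2 else 0 := by
  have hprod (r : ℝ) : neumannMode k r * neumannMode l r =
      1 / 2 * (cos ((k - l : ℤ) * π * r) + cos ((k + l + 2 : ℤ) * π * r)) := by
    have := two_mul_cos_mul_cos ((k + 1 : ℝ) * π * r) ((l + 1 : ℝ) * π * r)
    push_cast
    rw [neumannMode, neumannMode]
    linear_combination (norm := ring_nf) this / 2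
  simp_rw [hprod]
  rw [intervalIntegral.integral_const_mul, intervalIntegral.integral_add
      (Continuous.intervalIntegrable (by fun_prop) _ _)
      (Continuous.intervalIntegrable (by fun_prop) _ _),
    integral_cos_int_mul_pi_mul (by positivity : (k + l + 2 : ℤ) ≠ 0)]
  split_ifs with hkl
  · simp [hkl]
  · rw [integral_cos_int_mul_pi_mul (by omega)]; simp

lemma integral_tsum_neumannMode_sq {a : ℕ → ℝ} (ha : Summable a) :
    ∫ r in (0 : ℝ)..1, (∑' k, a k * neumannMode k r) ^ 2 = (∑' k, a k ^ 2) / 2 := by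
  have hgram := integral_neumannMode_mul
  simp_rw [intervalIntegral.integral_of_le (zero_le_one' ℝ)] at hgram ⊢
  rw [integral_tsum_sq_of_orthogonal (fun k ↦ (continuous_neumannMode k).measurable)
    abs_neumannMode_le_one (fun k l hkl ↦ (hgram k l).trans (if_neg hkl)) ha]
  simp_rw [sq (neumannMode _ _), hgram, if_true, tsum_mul_right]
  ring

section NeumannKernel

variable {β u w : ℝ}

lemma sum_range_exp_neg_neumannEigenvalue_mul_le (hu : 0 < u) (n : ℕ) :
    ∑ k ∈ Finset.range n, exp (-(neumannEigenvalue k * u)) ≤ 1 / (2 * √(π * u)) := by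
  calc ∑ k ∈ Finset.range n, exp (-(neumannEigenvalue k * u))
      = ∑ k ∈ Finset.range n, exp (-(π ^ 2 * u) * (k + 1 : ℝ) ^ 2) := by
        refine Finset.sum_congr rfl fun k _ ↦ congrArg exp ?_
        rw [neumannEigenvalue]; ring
    _ ≤ √(π / (π ^ 2 * u)) / 2 := sum_range_exp_neg_mul_succ_sq_le (by positivity) n
    _ = 1 / (2 * √(π * u)) := by
        rw [show π / (π ^ 2 * u) = (π * u)⁻¹ by field_simp, sqrt_inv]; field_simp

lemma summable_exp_neg_neumannEigenvalue_mul (hu : 0 < u) :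
    Summable fun k ↦ exp (-(neumannEigenvalue k * u)) :=
  summable_of_sum_range_le (fun _ ↦ (exp_pos _).le) (sum_range_exp_neg_neumannEigenvalue_mul_le hu)

lemma tsum_exp_neg_neumannEigenvalue_mul_le (hu : 0 < u) :
    ∑' k, exp (-(neumannEigenvalue k * u)) ≤ 1 / (2 * √(π * u)) :=
  Real.tsum_le_of_sum_range_le (fun _ ↦ (exp_pos _).le)
    (sum_range_exp_neg_neumannEigenvalue_mul_le hu)

lemma summable_mul_neumannMode {a : ℕ → ℝ} (ha : Summable a) (x : ℝ) :
    Summable fun k ↦ a k * neumannMode k x :=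
  .of_norm_bounded ha.abs fun k ↦ norm_mul_neumannMode_le _ k x

lemma summable_incrementCoeff (hu : 0 < u) (hw : 0 < w) (x : ℝ) :
    Summable (incrementCoeff u w x) :=
  summable_mul_neumannMode ((summable_exp_neg_neumannEigenvalue_mul hu).sub
    (summable_exp_neg_neumannEigenvalue_mul hw)) x

lemma GN_sub_GN (hu : 0 < u) (hw : 0 < w) (x r : ℝ) :
    GN u x r - GN w x r = 2 * ∑' k, incrementCoeff u w x k * neumannMode k r := by
  have hsum {t : ℝ} (ht : 0 < t) : Summable fun k ↦
      exp (-(neumannEigenvalue k * t)) * neumannMode k x * neumannMode k r :=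
    summable_mul_neumannMode
      (summable_mul_neumannMode (summable_exp_neg_neumannEigenvalue_mul ht) x) r
  simp_rw [incrementCoeff, sub_mul]
  rw [(hsum hu).tsum_sub (hsum hw), mul_sub]
  exact add_sub_add_left_eq_sub _ _ _

lemma continuous_GN_sub_GN (hu : 0 < u) (hw : 0 < w) (x : ℝ) :
    Continuous fun r ↦ GN u x r - GN w x r := by
  simp_rw [GN_sub_GN hu hw]
  exact continuous_const.mul (continuous_tsum (fun k ↦ (continuous_neumannMode k).const_mul _)
    (summable_incrementCoeff hu hw x).abs fun k ↦ norm_mul_neumannMode_le _ k)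

lemma abs_incrementCoeff_le (hu : 0 < u) (huw : u ≤ w) (hβ0 : 0 ≤ β) (hβ1 : β ≤ 1)
    (x : ℝ) (k : ℕ) :
    |incrementCoeff u w x k| ≤ ((w - u) / u) ^ β * exp (-(neumannEigenvalue k * (u / 2))) := by
  have hk := neumannEigenvalue_pos k
  have hle : neumannEigenvalue k * u ≤ neumannEigenvalue k * w := by gcongr
  calc |incrementCoeff u w x k|
      ≤ |exp (-(neumannEigenvalue k * u)) - exp (-(neumannEigenvalue k * w))| :=
        norm_mul_neumannMode_le _ k x
    _ = exp (-(neumannEigenvalue k * u)) - exp (-(neumannEigenvalue k * w)) :=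
        abs_of_nonneg (sub_nonneg.2 (exp_le_exp.2 (neg_le_neg hle)))
    _ ≤ ((neumannEigenvalue k * w - neumannEigenvalue k * u) / (neumannEigenvalue k * u)) ^ β *
          exp (-(neumannEigenvalue k * u) / 2) :=
        exp_neg_sub_exp_neg_le (mul_pos hk hu) hle hβ0 hβ1
    _ = ((w - u) / u) ^ β * exp (-(neumannEigenvalue k * (u / 2))) := by
        rw [← mul_sub, mul_div_mul_left _ _ hk.ne']; ring_nf

lemma abs_GN_sub_GN_le (hu : 0 < u) (huw : u ≤ w) (hβ0 : 0 ≤ β) (hβ1 : β ≤ 1) (x r : ℝ) :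
    |GN u x r - GN w x r| ≤ ((w - u) / u) ^ β / √u := by
  have hterm (k : ℕ) : ‖incrementCoeff u w x k * neumannMode k r‖ ≤
      ((w - u) / u) ^ β * exp (-(neumannEigenvalue k * (u / 2))) :=
    (norm_mul_neumannMode_le _ k r).trans (abs_incrementCoeff_le hu huw hβ0 hβ1 x k)
  calc |GN u x r - GN w x r|
      = 2 * |∑' k, incrementCoeff u w x k * neumannMode k r| := by
        rw [GN_sub_GN hu (hu.trans_le huw), abs_mul, abs_two]
    _ ≤ 2 * (((w - u) / u) ^ β * ∑' k, exp (-(neumannEigenvalue k * (u / 2)))) := by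
        rw [← tsum_mul_left]
        gcongr
        exact tsum_of_norm_bounded
          ((summable_exp_neg_neumannEigenvalue_mul (half_pos hu)).mul_left _).hasSum hterm
    _ ≤ 2 * (((w - u) / u) ^ β * (1 / (2 * √(π * (u / 2))))) := by
        gcongr; exact tsum_exp_neg_neumannEigenvalue_mul_le (half_pos hu)
    _ = ((w - u) / u) ^ β / √(π * (u / 2)) := by ring
    _ ≤ ((w - u) / u) ^ β / √u := by gcongr; nlinarith [pi_gt_three]

lemma integral_GN_sub_GN_sq_le (hu : 0 < u) (huw : u ≤ w) (hβ0 : 0 ≤ β) (hβ1 : β ≤ 1) (x : ℝ) :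
    ∫ r in (0 : ℝ)..1, (GN u x r - GN w x r) ^ 2 ≤ (((w - u) / u) ^ β) ^ 2 / √u := by
  have hcoeff (k : ℕ) : incrementCoeff u w x k ^ 2 ≤
      (((w - u) / u) ^ β) ^ 2 * exp (-(neumannEigenvalue k * u)) := by
    calc incrementCoeff u w x k ^ 2 = |incrementCoeff u w x k| ^ 2 := (sq_abs _).symm
      _ ≤ (((w - u) / u) ^ β * exp (-(neumannEigenvalue k * (u / 2)))) ^ 2 := by
          gcongr; exact abs_incrementCoeff_le hu huw hβ0 hβ1 x k
      _ = (((w - u) / u) ^ β) ^ 2 * exp (-(neumannEigenvalue k * u)) := by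
          rw [mul_pow, ← exp_nat_mul]; ring_nf
  have hdom := (summable_exp_neg_neumannEigenvalue_mul hu).mul_left ((((w - u) / u) ^ β) ^ 2)
  calc ∫ r in (0 : ℝ)..1, (GN u x r - GN w x r) ^ 2 = 2 * ∑' k, incrementCoeff u w x k ^ 2 := by
        have hw := hu.trans_le huw
        simp_rw [GN_sub_GN hu hw, mul_pow]
        rw [intervalIntegral.integral_const_mul,
          integral_tsum_neumannMode_sq (summable_incrementCoeff hu hw x)]
        ring
    _ ≤ 2 * ((((w - u) / u) ^ β) ^ 2 * ∑' k, exp (-(neumannEigenvalue k * u))) := by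
        rw [← tsum_mul_left (a := (((w - u) / u) ^ β) ^ 2)]
        exact mul_le_mul_of_nonneg_left
          ((hdom.of_nonneg_of_le (fun _ ↦ sq_nonneg _) hcoeff).tsum_le_tsum hcoeff hdom) zero_le_two
    _ ≤ 2 * ((((w - u) / u) ^ β) ^ 2 * (1 / (2 * √(π * u)))) := by
        gcongr; exact tsum_exp_neg_neumannEigenvalue_mul_le hu
    _ = (((w - u) / u) ^ β) ^ 2 / √(π * u) := by ring
    _ ≤ (((w - u) / u) ^ β) ^ 2 / √u := by gcongr; nlinarith [pi_gt_three]

end NeumannKernel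

section HeatKernel

variable {v : ℝ}

lemma heatKernel_sq (hv : 0 < v) (z : ℝ) :
    heatKernel v z ^ 2 = (4 * π * v)⁻¹ * exp (-(2 * v)⁻¹ * z ^ 2) := by
  rw [heatKernel, mul_pow, ← rpow_mul_natCast (by positivity), ← exp_nat_mul,
    ← rpow_neg_one]
  congr 2
  · norm_num
  · rw [Nat.cast_two]; field_simp; ring

lemma continuous_heatKernel_sub_sq (v y : ℝ) : Continuous fun r ↦ heatKernel v (y - r) ^ 2 := by
  unfold heatKernel; fun_prop

lemma heatKernel_sq_le (hv : 0 < v) (z : ℝ) : heatKernel v z ^ 2 ≤ 1 / v := by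
  have hexp : exp (-(2 * v)⁻¹ * z ^ 2) ≤ 1 :=
    exp_le_one_iff.2 (mul_nonpos_of_nonpos_of_nonneg (by simpa using hv.le) (sq_nonneg z))
  calc heatKernel v z ^ 2 = (4 * π * v)⁻¹ * exp (-(2 * v)⁻¹ * z ^ 2) := heatKernel_sq hv z
    _ ≤ (4 * π * v)⁻¹ * 1 := by gcongr
    _ ≤ 1 / v := by
        rw [mul_one, one_div]; gcongr; nlinarith [pi_gt_three]

lemma integrable_heatKernel_sq (hv : 0 < v) : Integrable fun z ↦ heatKernel v z ^ 2 := by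
  simp_rw [heatKernel_sq hv]
  exact (integrable_exp_neg_mul_sq (by positivity)).const_mul _

lemma integral_heatKernel_sq (hv : 0 < v) : ∫ z, heatKernel v z ^ 2 = 1 / √(8 * π * v) := by
  have hsqrt : √(8 * π * v) = 2 * √(2 * π * v) := by
    rw [show 8 * π * v = 2 ^ 2 * (2 * π * v) by ring, sqrt_mul (by positivity),
      sqrt_sq zero_le_two]
  simp_rw [heatKernel_sq hv]
  rw [integral_const_mul, integral_gaussian, div_inv_eq_mul, hsqrt,
    show π * (2 * v) = 2 * π * v by ring]
  field_simp
  rw [sq_sqrt (by positivity)]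
  ring

lemma integral_heatKernel_sub_sq_le (hv : 0 < v) (y : ℝ) :
    ∫ r in (0 : ℝ)..1, heatKernel v (y - r) ^ 2 ≤ 1 / √v := by
  calc ∫ r in (0 : ℝ)..1, heatKernel v (y - r) ^ 2
      ≤ ∫ r, heatKernel v (y - r) ^ 2 := by
        rw [intervalIntegral.integral_of_le zero_le_one]
        exact setIntegral_le_integral ((integrable_heatKernel_sq hv).comp_sub_left y)
          (.of_forall fun _ ↦ sq_nonneg _)
    _ = 1 / √(8 * π * v) := by
        rw [integral_sub_left_eq_self (fun z ↦ heatKernel v z ^ 2), integral_heatKernel_sq hv]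
    _ ≤ 1 / √v := by gcongr; nlinarith [pi_gt_three]

lemma integral_mul_heatKernel_sq_le_of_le {f : ℝ → ℝ} {A : ℝ} (hf : Continuous f) (hA : 0 ≤ A)
    (hfA : ∀ r, f r ≤ A) (hv : 0 < v) (y : ℝ) :
    ∫ r in (0 : ℝ)..1, f r * heatKernel v (y - r) ^ 2 ≤ A / √v := by
  have hp := continuous_heatKernel_sub_sq v y
  calc ∫ r in (0 : ℝ)..1, f r * heatKernel v (y - r) ^ 2
      ≤ ∫ r in (0 : ℝ)..1, A * heatKernel v (y - r) ^ 2 :=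
        intervalIntegral.integral_mono zero_le_one
          ((hf.mul hp).intervalIntegrable _ _) ((hp.const_mul A).intervalIntegrable _ _)
          fun r ↦ mul_le_mul_of_nonneg_right (hfA r) (sq_nonneg _)
    _ = A * ∫ r in (0 : ℝ)..1, heatKernel v (y - r) ^ 2 :=
        intervalIntegral.integral_const_mul _ _
    _ ≤ A * (1 / √v) := by gcongr; exact integral_heatKernel_sub_sq_le hv y
    _ = A / √v := mul_one_div _ _

lemma integral_mul_heatKernel_sq_le_integral_div {f : ℝ → ℝ} (hf : Continuous f)
    (hf0 : ∀ r, 0 ≤ f r) (hv : 0 < v) (y : ℝ) :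
    ∫ r in (0 : ℝ)..1, f r * heatKernel v (y - r) ^ 2 ≤ (∫ r in (0 : ℝ)..1, f r) / v := by
  have hp := continuous_heatKernel_sub_sq v y
  calc ∫ r in (0 : ℝ)..1, f r * heatKernel v (y - r) ^ 2
      ≤ ∫ r in (0 : ℝ)..1, f r * (1 / v) :=
        intervalIntegral.integral_mono zero_le_one
          ((hf.mul hp).intervalIntegrable _ _) ((hf.mul_const _).intervalIntegrable _ _)
          fun r ↦ mul_le_mul_of_nonneg_left (heatKernel_sq_le hv _) (hf0 r)
    _ = (∫ r in (0 : ℝ)..1, f r) / v := by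
        rw [intervalIntegral.integral_mul_const, mul_one_div]

end HeatKernel

section WeightedIncrement

variable {β u v w : ℝ}

lemma integral_GN_sub_GN_sq_mul_heatKernel_sq_le (hu : 0 < u) (huw : u ≤ w) (hv : 0 < v)
    (hβ0 : 0 ≤ β) (hβ1 : β ≤ 1) (x y : ℝ) :
    ∫ r in (0 : ℝ)..1, (GN u x r - GN w x r) ^ 2 * heatKernel v (y - r) ^ 2 ≤
      (((w - u) / u) ^ β) ^ 2 / (√u * √v * √(max u v)) := by
  have hcont := (continuous_GN_sub_GN hu (hu.trans_le huw) x).pow 2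
  rcases le_total v u with hvu | huv
  · have hsup (r : ℝ) : (GN u x r - GN w x r) ^ 2 ≤ (((w - u) / u) ^ β / √u) ^ 2 :=
      sq_le_sq.2 ((abs_GN_sub_GN_le hu huw hβ0 hβ1 x r).trans (le_abs_self _))
    refine (integral_mul_heatKernel_sq_le_of_le hcont (sq_nonneg _) hsup hv y).trans_eq ?_
    rw [max_eq_left hvu]
    field_simp
  · calc _ ≤ (∫ r in (0 : ℝ)..1, (GN u x r - GN w x r) ^ 2) / v :=
          integral_mul_heatKernel_sq_le_integral_div hcont (fun _ ↦ sq_nonneg _) hv y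
      _ ≤ (((w - u) / u) ^ β) ^ 2 / √u / v := by
          gcongr; exact integral_GN_sub_GN_sq_le hu huw hβ0 hβ1 x
      _ = (((w - u) / u) ^ β) ^ 2 / (√u * √v * √(max u v)) := by
          rw [max_eq_right huv, mul_assoc, mul_self_sqrt hv.le, div_div]

lemma sq_rpow_div_sqrt_max_le {h : ℝ} (hu : 0 < u) (hh : 0 ≤ h) (hv : 0 < v) :
    ((h / u) ^ β) ^ 2 / (√u * √v * √(max u v)) ≤
      √2 * h ^ (2 * β) * (u + v) ^ (-(1 / 2) : ℝ) *
        (v ^ (1 / 2 - 1 : ℝ) * u ^ (1 / 2 - 2 * β - 1)) := by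
  have hmax : (u + v) / 2 ≤ max u v := by linarith [le_max_left u v, le_max_right u v]
  have hratio : ((h / u) ^ β) ^ 2 = h ^ (2 * β) * u ^ (-(2 * β)) := by
    rw [← rpow_mul_natCast (by positivity), Nat.cast_two, mul_comm β, div_rpow hh hu.le,
      rpow_neg hu.le, div_eq_mul_inv]
  have hinv {z : ℝ} (hz : 0 < z) : z ^ (-(1 / 2) : ℝ) = (√z)⁻¹ := by
    rw [rpow_neg hz.le, ← sqrt_eq_rpow]
  calc ((h / u) ^ β) ^ 2 / (√u * √v * √(max u v))
      ≤ ((h / u) ^ β) ^ 2 / (√u * √v * √((u + v) / 2)) := by gcongr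
    _ = √2 * h ^ (2 * β) * (u + v) ^ (-(1 / 2) : ℝ) *
        (v ^ (-(1 / 2) : ℝ) * (u ^ (-(1 / 2) : ℝ) * u ^ (-(2 * β)))) := by
        rw [hratio, hinv hu, hinv hv, hinv (add_pos hu hv), sqrt_div' _ zero_le_two]
        field_simp
    _ = _ := by
        rw [← rpow_add hu, show -(1 / 2 : ℝ) = 1 / 2 - 1 by norm_num,
          show (1 / 2 - 1 : ℝ) + -(2 * β) = 1 / 2 - 2 * β - 1 by ring]

lemma integral_integral_GN_sub_GN_sq_mul_heatKernel_sq_le {s t t' : ℝ} (hst : s < t) (htt' : t ≤ t')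
    (hβ0 : 0 ≤ β) (hβ1 : β < 1 / 4) (x y : ℝ) :
    ∫ θ in s..t, ∫ r in (0 : ℝ)..1,
        (GN (t - θ) x r - GN (t' - θ) x r) ^ 2 * heatKernel (θ - s) (y - r) ^ 2 ≤
      √2 * ProbabilityTheory.beta (1 / 2) (1 / 2 - 2 * β) * (t' - t) ^ (2 * β) *
        (t - s) ^ (-(1 / 2) - 2 * β) := by
  have hL : 0 < t - s := sub_pos.2 hst
  have hb : 0 < 1 / 2 - 2 * β := by linarith
  set c := √2 * (t' - t) ^ (2 * β) * (t - s) ^ (-(1 / 2) : ℝ)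
  have hpointwise {θ : ℝ} (hθ : θ ∈ Set.Ioo s t) : ∫ r in (0 : ℝ)..1,
      (GN (t - θ) x r - GN (t' - θ) x r) ^ 2 * heatKernel (θ - s) (y - r) ^ 2 ≤
        c * ((θ - s) ^ (1 / 2 - 1 : ℝ) * (t - θ) ^ (1 / 2 - 2 * β - 1)) := by
    have hu : 0 < t - θ := sub_pos.2 hθ.2
    have huw : t - θ ≤ t' - θ := by linarith
    have hv : 0 < θ - s := sub_pos.2 hθ.1
    simpa only [c, sub_sub_sub_cancel_right, sub_add_sub_cancel] using
      (integral_GN_sub_GN_sq_mul_heatKernel_sq_le hu huw hv hβ0 (by linarith) x y).trans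
        (sq_rpow_div_sqrt_max_le hu (sub_nonneg.2 huw) hv)
  have hint := (intervalIntegrable_rpow_mul_rpow one_half_pos hb hst).const_mul c
  calc _ ≤ ∫ θ in s..t, c * ((θ - s) ^ (1 / 2 - 1 : ℝ) * (t - θ) ^ (1 / 2 - 2 * β - 1)) := by
        rw [intervalIntegral.integral_of_le hst.le, intervalIntegral.integral_of_le hst.le,
          integral_Ioc_eq_integral_Ioo, integral_Ioc_eq_integral_Ioo]
        exact integral_mono_of_nonneg
          (.of_forall fun θ ↦
            intervalIntegral.integral_nonneg zero_le_one fun r _ ↦ by positivity)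
          ((intervalIntegrable_iff_integrableOn_Ioo_of_le hst.le).1 hint)
          ((ae_restrict_iff' measurableSet_Ioo).2 (.of_forall fun θ ↦ hpointwise))
    _ = c * ((t - s) ^ (1 / 2 + (1 / 2 - 2 * β) - 1) *
          ProbabilityTheory.beta (1 / 2) (1 / 2 - 2 * β)) := by
        rw [intervalIntegral.integral_const_mul,
          integral_rpow_mul_rpow_eq_beta one_half_pos hb hst]
    _ = _ := by
        rw [show -(1 / 2) - 2 * β = -(1 / 2) + (1 / 2 + (1 / 2 - 2 * β) - 1) by ring, rpow_add hL]
        ring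

end WeightedIncrement

theorem neumann_kernel_weighted_time_increment_general {β : ℝ} (hβ0 : 0 ≤ β) (hβ1 : β < 1 / 4) :
    ∃ C : ℝ, 0 < C ∧ ∀ s t t' x y : ℝ, s < min t t' →
      (∫ θ in s..(min t t'), ∫ r in (0 : ℝ)..1,
          (GN (t - θ) x r - GN (t' - θ) x r) ^ 2 * (heatKernel (θ - s) (y - r)) ^ 2) ≤
        C * |t - t'| ^ (2 * β) * (min t t' - s) ^ (-(1/2) - 2 * β) := by
  refine ⟨√2 * ProbabilityTheory.beta (1 / 2) (1 / 2 - 2 * β),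
    mul_pos (by positivity) (ProbabilityTheory.beta_pos one_half_pos (by linarith)), ?_⟩
  intro s t t' x y hs
  wlog htt' : t ≤ t' generalizing t t'
  · simpa only [min_comm t, abs_sub_comm t, sub_sq_comm (GN (t - _) x _)] using
      this t' t (min_comm t t' ▸ hs) (le_of_not_ge htt')
  rw [min_eq_left htt'] at hs ⊢
  rw [abs_sub_comm, abs_of_nonneg (sub_nonneg.2 htt')]
  exact integral_integral_GN_sub_GN_sq_mul_heatKernel_sq_le hs htt' hβ0 hβ1 x y

theorem neumann_kernel_weighted_time_increment (β T : ℝ) (hβ0 : 0 < β) (hβ1 : β < 1 / 4)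
    (hT : 0 < T) :
    ∃ C : ℝ, 0 < C ∧ ∀ s t t' x' y : ℝ, 0 ≤ s → s < min t t' → t ≤ T → t' ≤ T →
      x' ∈ Set.Icc (0 : ℝ) 1 → y ∈ Set.Icc (0 : ℝ) 1 →
      (∫ θ in s..(min t t'), ∫ r in (0 : ℝ)..1,
          (GN (t - θ) x' r - GN (t' - θ) x' r) ^ 2 * (heatKernel (θ - s) (y - r)) ^ 2) ≤
        C * |t - t'| ^ (2 * β) * (min t t' - s) ^ (-(1/2) - 2 * β) := by
  obtain ⟨C, hC, hbound⟩ := neumann_kernel_weighted_time_increment_general hβ0.le hβ1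
  exact ⟨C, hC, fun s t t' x' y _ hs _ _ _ _ ↦ hbound s t t' x' y hs⟩
end
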